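/- For system (m1) with a = 2, b = 1 and μ₁ ≠ 0, if the parameters satisfy 2p·(μ₁μ₂ − 2) = μ₁³ (the boundary case of condition (m2), corresponding to the bifurcation curve (m5)), then the point (−2/μ₁, 0) is an equilibrium of the system, and the Jacobian matrix of the vector field at this equilibrium has both trace and determinant equal to zero, so both eigenvalues of the linearization are zero. -/

import Mathlib

open Real Polynomial

/-- An equilibrium of system (m1): both right-hand sides
`(a + μ₁u)·sin v` and `p·(b·u² + μ₂·u) + μ₁·cos v` vanish. -/
def IsM1Equil (a b μ₁ μ₂ : ℝ) (p : ℕ) (q : ℝ × ℝ) : Prop :=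
  (a + μ₁ * q.1) * Real.sin q.2 = 0 ∧
  (p : ℝ) * (b * q.1 ^ 2 + μ₂ * q.1) + μ₁ * Real.cos q.2 = 0

/-- The Jacobian matrix of the vector field of system (m1) at the point `(u, v)`:
the 2×2 matrix of partial derivatives of the right-hand sides with respect to
`u` and `v`. -/
noncomputable def m1Jacobian (a b μ₁ μ₂ : ℝ) (p : ℕ) (u v : ℝ) :
    Matrix (Fin 2) (Fin 2) ℝ :=
  !![deriv (fun u' : ℝ => (a + μ₁ * u') * Real.sin v) u,
     deriv (fun v' : ℝ => (a + μ₁ * u) * Real.sin v') v;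
     deriv (fun u' : ℝ => (p : ℝ) * (b * u' ^ 2 + μ₂ * u') + μ₁ * Real.cos v) u,
     deriv (fun v' : ℝ => (p : ℝ) * (b * u ^ 2 + μ₂ * u) + μ₁ * Real.cos v') v]

/-! The vector field of (m1) is divergence-free, so its Jacobian has trace zero everywhere and the
characteristic polynomial is `X ^ 2 + C det`. Where `a + μ₁ * u = 0` and `sin v = 0`, the first row
of the Jacobian vanishes, and with it the determinant; the parameter relation is exactly what makes
the second right-hand side vanish at `u = -a / μ₁`. -/

theorem add_mul_neg_div_self {K : Type*} [Field K] {a m : K} (hm : m ≠ 0) :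
    a + m * (-a / m) = 0 := by
  rw [mul_div_cancel₀ _ hm, add_neg_cancel]

section M1

variable (a b μ₁ μ₂ : ℝ) (p : ℕ) (u v : ℝ)

theorem m1Jacobian_eq :
    m1Jacobian a b μ₁ μ₂ p u v =
      !![μ₁ * sin v, (a + μ₁ * u) * cos v;
         p * (2 * b * u + μ₂), -(μ₁ * sin v)] := by
  have hasDerivAt_quadratic : HasDerivAt (fun x : ℝ => b * x ^ 2 + μ₂ * x) (2 * b * u + μ₂) u := by
    refine (((hasDerivAt_pow 2 u).const_mul b).fun_add (hasDerivAt_const_mul μ₂)).congr_deriv ?_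
    push_cast
    ring
  have deriv_fst_u : deriv (fun x => (a + μ₁ * x) * sin v) u = μ₁ * sin v := by simp
  have deriv_fst_v : deriv (fun y => (a + μ₁ * u) * sin y) v = (a + μ₁ * u) * cos v := by simp
  have deriv_snd_u : deriv (fun x => p * (b * x ^ 2 + μ₂ * x) + μ₁ * cos v) u =
      p * (2 * b * u + μ₂) :=
    ((hasDerivAt_quadratic.const_mul (p : ℝ)).add_const _).deriv
  have deriv_snd_v : deriv (fun y => p * (b * u ^ 2 + μ₂ * u) + μ₁ * cos y) v =
      -(μ₁ * sin v) := by simp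
  rw [m1Jacobian, deriv_fst_u, deriv_fst_v, deriv_snd_u, deriv_snd_v]

theorem trace_m1Jacobian : (m1Jacobian a b μ₁ μ₂ p u v).trace = 0 := by
  simp [m1Jacobian_eq, Matrix.trace_fin_two]

theorem charpoly_m1Jacobian :
    (m1Jacobian a b μ₁ μ₂ p u v).charpoly = X ^ 2 + C (m1Jacobian a b μ₁ μ₂ p u v).det := by
  simp [Matrix.charpoly_fin_two, trace_m1Jacobian]

variable {a μ₁ u v}

theorem det_m1Jacobian_eq_zero (hu : a + μ₁ * u = 0) (hv : sin v = 0) :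
    (m1Jacobian a b μ₁ μ₂ p u v).det = 0 := by
  simp [m1Jacobian_eq, Matrix.det_fin_two, hu, hv]

theorem isM1Equil_neg_div_iff (hμ₁ : μ₁ ≠ 0) :
    IsM1Equil a b μ₁ μ₂ p (-a / μ₁, v) ↔
      a * (p : ℝ) * (μ₁ * μ₂ - a * b) = μ₁ ^ 3 * cos v := by
  have snd_eq : p * (b * (-a / μ₁) ^ 2 + μ₂ * (-a / μ₁)) + μ₁ * cos v =
      (μ₁ ^ 3 * cos v - a * p * (μ₁ * μ₂ - a * b)) / μ₁ ^ 2 := by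
    field_simp
    ring
  simp only [IsM1Equil, add_mul_neg_div_self hμ₁, zero_mul, true_and, snd_eq, div_eq_zero_iff,
    pow_eq_zero_iff two_ne_zero, hμ₁, or_false, sub_eq_zero]
  exact eq_comm

end M1

theorem stmt_11_general (a b μ₁ μ₂ v : ℝ) (p : ℕ) (hμ₁ : μ₁ ≠ 0) (hv : sin v = 0)
    (h : a * (p : ℝ) * (μ₁ * μ₂ - a * b) = μ₁ ^ 3 * cos v) :
    IsM1Equil a b μ₁ μ₂ p (-a / μ₁, v) ∧
    (m1Jacobian a b μ₁ μ₂ p (-a / μ₁) v).trace = 0 ∧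
    (m1Jacobian a b μ₁ μ₂ p (-a / μ₁) v).det = 0 ∧
    (m1Jacobian a b μ₁ μ₂ p (-a / μ₁) v).charpoly = X ^ 2 := by
  have det_eq_zero : (m1Jacobian a b μ₁ μ₂ p (-a / μ₁) v).det = 0 :=
    det_m1Jacobian_eq_zero b μ₂ p (add_mul_neg_div_self hμ₁) hv
  refine ⟨(isM1Equil_neg_div_iff b μ₂ p hμ₁).mpr h, trace_m1Jacobian .., det_eq_zero, ?_⟩
  rw [charpoly_m1Jacobian, det_eq_zero, C_0, add_zero]

/-- for system (m1) with `a = 2`, `b = 1`, `μ₁ ≠ 0`, if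
`2p(μ₁μ₂ − 2) = μ₁³` (the boundary case of condition (m2), i.e. the bifurcation
curve (m5)), then `(−2/μ₁, 0)` is an equilibrium whose Jacobian matrix has zero
trace and zero determinant, hence both eigenvalues of the linearization are zero
(its characteristic polynomial is `λ²`). -/
theorem stmt_11 (μ₁ μ₂ : ℝ) (p : ℕ) (hp : 0 < p) (hμ₁ : μ₁ ≠ 0)
    (h : 2 * (p : ℝ) * (μ₁ * μ₂ - 2) = μ₁ ^ 3) :
    IsM1Equil 2 1 μ₁ μ₂ p (-2 / μ₁, 0) ∧
    (m1Jacobian 2 1 μ₁ μ₂ p (-2 / μ₁) 0).trace = 0 ∧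
    (m1Jacobian 2 1 μ₁ μ₂ p (-2 / μ₁) 0).det = 0 ∧
    (m1Jacobian 2 1 μ₁ μ₂ p (-2 / μ₁) 0).charpoly = X ^ 2 :=
  stmt_11_general 2 1 μ₁ μ₂ 0 p hμ₁ sin_zero (by simpa using h)
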